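/- Under the stated hypotheses on G, if n ≥ 10 then the eigenvector x satisfies x_k > x_{n−1}. -/

import Mathlib

open Matrix

/-- The signless Laplacian `Q(G) = D(G) + A(G)` of a finite simple graph `G`. -/
noncomputable def signlessLaplacian {V : Type*} [Fintype V] (G : SimpleGraph V) :
    Matrix V V ℝ :=
  letI := Classical.decEq V
  letI : DecidableRel G.Adj := Classical.decRel _
  Matrix.diagonal (fun v => (G.degree v : ℝ)) + G.adjMatrix ℝ

/-- The `Q`-index of `G`: the largest eigenvalue of the signless Laplacian `Q(G)`. -/
noncomputable def qIndex {V : Type*} [Fintype V] (G : SimpleGraph V) : ℝ :=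
  letI := Classical.decEq V
  sSup (spectrum ℝ (signlessLaplacian G))

/-!
Write `w = v_{n-1}` and `c = v_k`. The eigenvalue equation at `u` says that the entries of `x` over
the closed neighborhood of `u` sum to `(q + 1 - d(u)) x_u`. Subtracting the equations at `w` and `c`
cancels the common closed neighbors: only `v_0` and `v_1` remain on the side of `w`, while `v_3`
is among those left on the side of `c`. Since `n ≥ 10` gives `d(c) ≥ 7 = d(w) + 2`, the
assumption `x_c ≤ x_w` would force `2 x_w + x_3 ≤ x_0 + x_1`. But `q > d(c) ≥ 7`, and then the sum
of the equations at `v_0`, `v_1`, `v_2` gives the opposite strict inequality.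
-/

/-- The closed neighborhood `N[v] = N(v) ∪ {v}`. Two adjacent vertices lie in both of their closed
neighborhoods, so they cancel when these are compared. -/
def closedNeighborFinset {V : Type*} [Fintype V] [DecidableEq V] (G : SimpleGraph V)
    [DecidableRel G.Adj] (v : V) : Finset V :=
  insert v (G.neighborFinset v)

theorem sum_le_sum_comp_of_subset_range {ι V R : Type*} [Fintype ι] [AddCommMonoid R]
    [PartialOrder R] [IsOrderedAddMonoid R] {g : V → R} (hg : ∀ u, 0 ≤ g u) {s : Finset V}
    {f : ι → V} (hs : (s : Set V) ⊆ Set.range f) : ∑ u ∈ s, g u ≤ ∑ i, g (f i) := by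
  classical
  have hsub : s ⊆ Finset.univ.image f := fun u hu ↦ by simpa using hs hu
  exact (Finset.sum_le_sum_of_subset_of_nonneg hsub fun u _ _ ↦ hg u).trans
    (Finset.sum_image_le_of_nonneg fun u _ ↦ hg u)

section

variable {V : Type*} [Fintype V] {G : SimpleGraph V} {x : V → ℝ} {q : ℝ}

theorem card_le_card_add_degree [DecidableRel G.Adj] {v : V} {s : Finset V}
    (hs : ∀ u ∉ s, G.Adj v u) : Fintype.card V ≤ s.card + G.degree v := by
  classical
  have hsub : sᶜ ⊆ G.neighborFinset v := fun u hu ↦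
    (G.mem_neighborFinset v u).mpr (hs u (Finset.mem_compl.mp hu))
  rw [← Finset.card_add_card_compl s, ← G.card_neighborFinset_eq_degree]
  exact Nat.add_le_add_left (Finset.card_le_card hsub) _

theorem signlessLaplacian_mulVec_apply [DecidableRel G.Adj] (v : V) :
    (signlessLaplacian G *ᵥ x) v = ∑ u ∈ G.neighborFinset v, (x v + x u) := by
  classical
  have hQ : signlessLaplacian G = G.degMatrix ℝ + G.adjMatrix ℝ := by
    unfold signlessLaplacian SimpleGraph.degMatrix
    congr!
  rw [hQ, add_mulVec, Pi.add_apply, SimpleGraph.degMatrix_mulVec_apply,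
    SimpleGraph.adjMatrix_mulVec_apply, Finset.sum_add_distrib, Finset.sum_const,
    SimpleGraph.card_neighborFinset_eq_degree, nsmul_eq_mul]

theorem eigenvalue_mul_eq_sum_neighborFinset [DecidableRel G.Adj]
    (heig : signlessLaplacian G *ᵥ x = q • x) (v : V) :
    q * x v = ∑ u ∈ G.neighborFinset v, (x v + x u) := by
  rw [← signlessLaplacian_mulVec_apply, heig, Pi.smul_apply, smul_eq_mul]

theorem eigenvalue_sub_degree_mul_eq_sum [DecidableRel G.Adj]
    (heig : signlessLaplacian G *ᵥ x = q • x) (v : V) :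
    (q - G.degree v) * x v = ∑ u ∈ G.neighborFinset v, x u := by
  rw [sub_mul, eigenvalue_mul_eq_sum_neighborFinset heig, Finset.sum_add_distrib,
    Finset.sum_const, SimpleGraph.card_neighborFinset_eq_degree, nsmul_eq_mul, add_sub_cancel_left]

theorem degree_lt_eigenvalue [DecidableRel G.Adj]
    (heig : signlessLaplacian G *ᵥ x = q • x) (hpos : ∀ u, 0 < x u) {v : V}
    (hv : 0 < G.degree v) : (G.degree v : ℝ) < q := by
  have hsum : 0 < ∑ u ∈ G.neighborFinset v, x u :=
    Finset.sum_pos (fun u _ ↦ hpos u) (Finset.card_pos.mp hv)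
  rw [← eigenvalue_sub_degree_mul_eq_sum heig] at hsum
  exact sub_pos.mp (pos_of_mul_pos_left hsum (hpos v).le)

theorem eigenvalue_sub_mul_le_sum_of_neighborSet_subset_range
    (heig : signlessLaplacian G *ᵥ x = q • x) (hx : ∀ u, 0 ≤ x u) {v : V} {m : ℕ}
    {f : Fin m → V} (hf : G.neighborSet v ⊆ Set.range f) :
    (q - m) * x v ≤ ∑ i, x (f i) := by
  classical
  have hle : q * x v ≤ ∑ i, (x v + x (f i)) := by
    rw [eigenvalue_mul_eq_sum_neighborFinset heig]
    exact sum_le_sum_comp_of_subset_range (g := fun u ↦ x v + x u)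
      (fun u ↦ add_nonneg (hx v) (hx u)) (by rwa [G.coe_neighborFinset])
  rw [Finset.sum_add_distrib, Finset.sum_const, Finset.card_univ, Fintype.card_fin,
    nsmul_eq_mul] at hle
  linarith

theorem sum_closedNeighborFinset [DecidableEq V] [DecidableRel G.Adj]
    (heig : signlessLaplacian G *ᵥ x = q • x) (v : V) :
    ∑ u ∈ closedNeighborFinset G v, x u = (q + 1 - G.degree v) * x v := by
  rw [closedNeighborFinset, Finset.sum_insert (G.notMem_neighborFinset_self v),
    ← eigenvalue_sub_degree_mul_eq_sum heig]
  ring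

theorem degree_sub_mul_add_sum_sdiff_le [DecidableEq V] [DecidableRel G.Adj]
    (heig : signlessLaplacian G *ᵥ x = q • x) {v w : V} (hq : G.degree v ≤ q + 1)
    (hvw : x v ≤ x w) :
    (G.degree v - G.degree w) * x w +
        ∑ u ∈ closedNeighborFinset G v \ closedNeighborFinset G w, x u ≤
      ∑ u ∈ closedNeighborFinset G w \ closedNeighborFinset G v, x u := by
  have hdiff := Finset.sum_sdiff_sub_sum_sdiff (s₁ := closedNeighborFinset G v)
    (s₂ := closedNeighborFinset G w) (f := x)
  rw [sum_closedNeighborFinset heig, sum_closedNeighborFinset heig] at hdiff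
  have hgap : 0 ≤ (q + 1 - G.degree v) * (x w - x v) :=
    mul_nonneg (sub_nonneg.mpr hq) (sub_nonneg.mpr hvw)
  linarith

theorem add_lt_two_mul_add_of_neighborSet_subset
    (heig : signlessLaplacian G *ᵥ x = q • x) (hpos : ∀ u, 0 < x u) (hq : 7 ≤ q)
    {v₀ v₁ v₂ v₃ w c : V} (h₀ : G.neighborSet v₀ ⊆ {v₁, w})
    (h₁ : G.neighborSet v₁ ⊆ {v₀, v₂, w}) (h₂ : G.neighborSet v₂ ⊆ {v₁, v₃, c, w})
    (hcw : x c ≤ x w) : x v₀ + x v₁ < 2 * x w + x v₃ := by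
  have hx (u : V) : 0 ≤ x u := (hpos u).le
  have heq₀ : (q - 2) * x v₀ ≤ x v₁ + x w := by
    simpa using eigenvalue_sub_mul_le_sum_of_neighborSet_subset_range heig hx
      (f := ![v₁, w]) (h₀.trans (by simp [Set.insert_subset_iff]))
  have heq₁ : (q - 3) * x v₁ ≤ x v₀ + x v₂ + x w := by
    simpa [Fin.sum_univ_succ, add_assoc] using
      eigenvalue_sub_mul_le_sum_of_neighborSet_subset_range heig hx
        (f := ![v₀, v₂, w]) (h₁.trans (by simp [Set.insert_subset_iff]))
  have heq₂ : (q - 4) * x v₂ ≤ x v₁ + x v₃ + x c + x w := by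
    simpa [Fin.sum_univ_succ, add_assoc] using
      eigenvalue_sub_mul_le_sum_of_neighborSet_subset_range heig hx
        (f := ![v₁, v₃, c, w]) (h₂.trans (by simp [Set.insert_subset_iff]))
  have hle₀ : 5 * x v₀ ≤ (q - 2) * x v₀ := mul_le_mul_of_nonneg_right (by linarith) (hx v₀)
  have hle₁ : 4 * x v₁ ≤ (q - 3) * x v₁ := mul_le_mul_of_nonneg_right (by linarith) (hx v₁)
  have hle₂ : 3 * x v₂ ≤ (q - 4) * x v₂ := mul_le_mul_of_nonneg_right (by linarith) (hx v₂)
  have hsum : 4 * x v₀ + 2 * x v₁ + 2 * x v₂ ≤ 4 * x w + x v₃ := by linarith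
  linarith [hsum, hpos v₀, hpos v₂, hpos v₃]

theorem closedNeighborFinset_sdiff_subset [DecidableEq V] [DecidableRel G.Adj]
    {v w : V} {s t : Set V} (hw : G.neighborSet w ⊆ insert v (s ∪ t))
    (hv : insert w t ⊆ G.neighborSet v) :
    ↑(closedNeighborFinset G w \ closedNeighborFinset G v) ⊆ s := by
  intro z hz
  simp only [closedNeighborFinset, Finset.coe_sdiff, Finset.coe_insert, G.coe_neighborFinset,
    Set.mem_sdiff, Set.mem_insert_iff, not_or] at hz
  obtain ⟨hzw, hz_ne, hzv⟩ := hz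
  have hz_notMem : z ∉ insert w t := fun h ↦ hzv (hv h)
  have hz_mem : z ∈ insert v (s ∪ t) := hw (hzw.resolve_left fun h ↦ hz_notMem (.inl h))
  grind

theorem stmt_9_general [DecidableRel G.Adj]
    (heig : signlessLaplacian G *ᵥ x = q • x) (hpos : ∀ u, 0 < x u)
    {v₀ v₁ v₂ v₃ m w c : V} (h₀ : G.neighborSet v₀ ⊆ {v₁, w})
    (h₁ : G.neighborSet v₁ ⊆ {v₀, v₂, w}) (h₂ : G.neighborSet v₂ ⊆ {v₁, v₃, c, w})
    (hw : G.neighborSet w ⊆ {v₀, v₁, v₂, c, m}) (hc : {w, v₂, m} ⊆ G.neighborSet c)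
    (hcv₃ : G.Adj c v₃) (hwv₃ : ¬G.Adj w v₃) (hne : v₃ ≠ w) (hdeg : 7 ≤ G.degree c) :
    x w < x c := by
  classical
  by_contra! hcw
  have hlt : (G.degree c : ℝ) < q := degree_lt_eigenvalue heig hpos (by omega)
  have hc7 : (7 : ℝ) ≤ G.degree c := mod_cast hdeg
  have hw5 : (G.degree w : ℝ) ≤ 5 := by
    have hsub : G.neighborFinset w ⊆ {v₀, v₁, v₂, c, m} := fun u hu ↦ by
      simpa using hw ((G.mem_neighborFinset w u).mp hu)
    exact_mod_cast (Finset.card_le_card hsub).trans Finset.card_le_five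
  have hupper : ∑ u ∈ closedNeighborFinset G w \ closedNeighborFinset G c, x u ≤
      x v₀ + x v₁ := by
    have hsub : ↑(closedNeighborFinset G w \ closedNeighborFinset G c) ⊆ Set.range ![v₀, v₁] :=
      closedNeighborFinset_sdiff_subset (t := {v₂, m})
        (hw.trans (by simp [Set.insert_subset_iff])) hc
    simpa using sum_le_sum_comp_of_subset_range (fun u ↦ (hpos u).le) hsub
  have hlower : x v₃ ≤ ∑ u ∈ closedNeighborFinset G c \ closedNeighborFinset G w, x u :=
    Finset.single_le_sum (f := x) (fun u _ ↦ (hpos u).le)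
      (by simp [closedNeighborFinset, hcv₃, hwv₃, hne])
  have hsum_lt : x v₀ + x v₁ < 2 * x w + x v₃ :=
    add_lt_two_mul_add_of_neighborSet_subset heig hpos (hc7.trans hlt.le) h₀ h₁ h₂ hcw
  have hdegw : 2 * x w ≤ (G.degree c - G.degree w) * x w :=
    mul_le_mul_of_nonneg_right (by linarith) (hpos w).le
  linarith [degree_sub_mul_add_sum_sdiff_le heig (by linarith) hcw]

end

/-- for the maximal outer-planar graph of type `D_1` with `Δ = n - 3`,
if `n ≥ 10` then the Perron eigenvector satisfies `x_k > x_{n-1}`. -/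
theorem stmt_9 (n k : ℕ) (hn : 7 ≤ n) (hk1 : 4 ≤ k) (hk2 : k ≤ n - 3)
    (G : SimpleGraph (Fin n))
    (h0 : G.neighborSet ⟨0, by omega⟩ = {⟨1, by omega⟩, ⟨n - 1, by omega⟩})
    (h1 : G.neighborSet ⟨1, by omega⟩ =
      {⟨0, by omega⟩, ⟨2, by omega⟩, ⟨n - 1, by omega⟩})
    (h2 : G.neighborSet ⟨2, by omega⟩ =
      {⟨1, by omega⟩, ⟨3, by omega⟩, ⟨k, by omega⟩, ⟨n - 1, by omega⟩})
    (hlast : G.neighborSet ⟨n - 1, by omega⟩ =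
      {⟨0, by omega⟩, ⟨1, by omega⟩, ⟨2, by omega⟩, ⟨k, by omega⟩, ⟨n - 2, by omega⟩})
    (hk' : G.neighborSet ⟨k, by omega⟩ =
      {u : Fin n | 2 ≤ u.val ∧ u ≠ ⟨k, by omega⟩})
    (x : Fin n → ℝ) (hpos : ∀ i, 0 < x i)
    (heig : (signlessLaplacian G).mulVec x = qIndex G • x)
    (hn10 : 10 ≤ n) :
    x ⟨n - 1, by omega⟩ < x ⟨k, by omega⟩ := by
  classical
  have hdeg : n ≤ 3 + G.degree ⟨k, by omega⟩ := by
    refine (Fintype.card_fin n).ge.trans <| (card_le_card_add_degree (v := ⟨k, by omega⟩)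
      (s := {⟨0, by omega⟩, ⟨1, by omega⟩, ⟨k, by omega⟩}) fun u hu ↦ ?_).trans
        (Nat.add_le_add_right Finset.card_le_three _)
    simp only [Finset.mem_insert, Finset.mem_singleton, Fin.ext_iff, not_or] at hu
    exact hk'.ge ⟨by omega, by simpa [Fin.ext_iff] using hu.2.2⟩
  refine stmt_9_general heig hpos h0.subset h1.subset h2.subset hlast.subset ?_ (hk'.ge ?_)
    (fun h ↦ absurd (hlast.le h) ?_) ?_ (by omega) <;>
    simp only [hk', Set.insert_subset_iff, Set.singleton_subset_iff, Set.mem_ofPred_eq,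
      Set.mem_insert_iff, Set.mem_singleton_iff, ne_eq, Fin.ext_iff] <;>
    omega
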